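/- arXiv:1907.05111 — 3 statements merged into one kernel-verified Lean document; each statement's English description precedes it below -/
import Mathlib

section
/- Let (φ_n), (ψ_n) be biorthogonal families in ℋ with (ψ_n) complete, and let X, Y be bounded operators on ℋ with X φ_0 = c_0 φ_0, X φ_n = c_n φ_n + d_n φ_{n−1} (n ≥ 1), Y ψ_0 = c'_0 ψ_0, and Y ψ_n = c'_n ψ_n + d'_n ψ_{n−1} (n ≥ 1). Then H := Y† X satisfies, for every n ≥ 1, H φ_n = d_n conj(c'_{n−1}) φ_{n−1} + (c_n conj(c'_n) + d_n conj(d'_n)) φ_n + c_n conj(d'_{n+1}) φ_{n+1}, and H φ_0 = c_0 conj(c'_0) φ_0 + c_0 conj(d'_1) φ_1. In particular, H is (φ,ψ)-tridiagonal with a_n = c_n conj(c'_n) + d_n conj(d'_n) (a_0 = c_0 conj(c'_0)), b'_{n−1} = d_n conj(c'_{n−1}), and b_{n+1} = c_n conj(d'_{n+1}). -/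
local notation "⟪" x ", " y "⟫" => @inner ℂ _ _ x y

/-- The adjoint of an operator lowering the complete family `ψ` raises the biorthogonal family. -/
theorem adjoint_apply_of_biorthogonal {𝓗 : Type*} [NormedAddCommGroup 𝓗] [InnerProductSpace ℂ 𝓗]
    [CompleteSpace 𝓗] (Y : 𝓗 →L[ℂ] 𝓗) (φ ψ : ℕ → 𝓗)
    (hbi : ∀ n m : ℕ, ⟪ψ n, φ m⟫ = if n = m then 1 else 0)
    (hcomp : ∀ f : 𝓗, (∀ n : ℕ, ⟪ψ n, f⟫ = 0) → f = 0)
    (c' d' : ℕ → ℂ) (hY0 : Y (ψ 0) = c' 0 • ψ 0)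
    (hY : ∀ n : ℕ, Y (ψ (n + 1)) = c' (n + 1) • ψ (n + 1) + d' (n + 1) • ψ n) (m : ℕ) :
    ContinuousLinearMap.adjoint Y (φ m) =
      (starRingEnd ℂ) (c' m) • φ m + (starRingEnd ℂ) (d' (m + 1)) • φ (m + 1) := by
  rw [← sub_eq_zero]
  refine hcomp _ fun n => ?_
  rw [inner_sub_right, ContinuousLinearMap.adjoint_inner_right]
  rcases n with _ | n
  · simp only [hY0, inner_add_right, inner_smul_left, inner_smul_right, hbi]
    grind
  · simp only [hY, inner_add_left, inner_add_right, inner_smul_left, inner_smul_right, hbi]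
    grind

/-- With `X φ 0 = c 0 • φ 0`, `X φ n = c n • φ n + d n • φ (n-1)` (`n ≥ 1`),
`Y ψ 0 = c' 0 • ψ 0`, `Y ψ n = c' n • ψ n + d' n • ψ (n-1)` (`n ≥ 1`), and `(ψ n)` complete,
the operator `H = Y† X` acts as
`H φ n = d n conj (c' (n-1)) • φ (n-1) + (c n conj (c' n) + d n conj (d' n)) • φ n
  + c n conj (d' (n+1)) • φ (n+1)` for `n ≥ 1`,
`H φ 0 = c 0 conj (c' 0) • φ 0 + c 0 conj (d' 1) • φ 1`; in particular `H` is
`(φ,ψ)`-tridiagonal with `a n = c n conj (c' n) + d n conj (d' n)` (`a 0 = c 0 conj (c' 0)`),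
`b' (n-1) = d n conj (c' (n-1))`, `b (n+1) = c n conj (d' (n+1))`. -/
theorem stmt_7 {𝓗 : Type*} [NormedAddCommGroup 𝓗] [InnerProductSpace ℂ 𝓗] [CompleteSpace 𝓗]
    (X Y : 𝓗 →L[ℂ] 𝓗) (φ ψ : ℕ → 𝓗)
    (hbi : ∀ n m : ℕ, ⟪φ n, ψ m⟫ = if n = m then 1 else 0)
    (hcomp : ∀ f : 𝓗, (∀ n : ℕ, ⟪ψ n, f⟫ = 0) → f = 0)
    (c d c' d' : ℕ → ℂ)
    (hX0 : X (φ 0) = c 0 • φ 0)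
    (hX : ∀ n : ℕ, 1 ≤ n → X (φ n) = c n • φ n + d n • φ (n - 1))
    (hY0 : Y (ψ 0) = c' 0 • ψ 0)
    (hY : ∀ n : ℕ, 1 ≤ n → Y (ψ n) = c' n • ψ n + d' n • ψ (n - 1)) :
    (∀ n : ℕ, 1 ≤ n →
      (ContinuousLinearMap.adjoint Y ∘L X) (φ n) =
        (d n * (starRingEnd ℂ) (c' (n - 1))) • φ (n - 1) +
          (c n * (starRingEnd ℂ) (c' n) + d n * (starRingEnd ℂ) (d' n)) • φ n +
          (c n * (starRingEnd ℂ) (d' (n + 1))) • φ (n + 1)) ∧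
    (ContinuousLinearMap.adjoint Y ∘L X) (φ 0) =
      (c 0 * (starRingEnd ℂ) (c' 0)) • φ 0 + (c 0 * (starRingEnd ℂ) (d' 1)) • φ 1 ∧
    (∀ n m : ℕ, ⟪ψ n, (ContinuousLinearMap.adjoint Y ∘L X) (φ m)⟫ =
      (if n = m + 1 then c (n - 1) * (starRingEnd ℂ) (d' n) else 0) +
        (if n = m then
          (if n = 0 then c 0 * (starRingEnd ℂ) (c' 0)
            else c n * (starRingEnd ℂ) (c' n) + d n * (starRingEnd ℂ) (d' n)) else 0) +
        (if m = n + 1 then d (n + 1) * (starRingEnd ℂ) (c' n) else 0)) := by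
  have hbi' : ∀ n m : ℕ, ⟪ψ n, φ m⟫ = if n = m then 1 else 0 := fun n m => by
    rw [← inner_conj_symm, hbi]
    split_ifs <;> simp_all
  have hadj := adjoint_apply_of_biorthogonal Y φ ψ hbi' hcomp c' d' hY0
    fun n => by simpa using hY (n + 1) (by omega)
  have hsucc : ∀ n : ℕ, 1 ≤ n → (ContinuousLinearMap.adjoint Y ∘L X) (φ n) =
      (d n * (starRingEnd ℂ) (c' (n - 1))) • φ (n - 1) +
        (c n * (starRingEnd ℂ) (c' n) + d n * (starRingEnd ℂ) (d' n)) • φ n +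
        (c n * (starRingEnd ℂ) (d' (n + 1))) • φ (n + 1) := fun n hn => by
    rw [ContinuousLinearMap.comp_apply, hX n hn, map_add, map_smul, map_smul, hadj, hadj,
      Nat.sub_add_cancel hn]
    module
  have hzero : (ContinuousLinearMap.adjoint Y ∘L X) (φ 0) =
      (c 0 * (starRingEnd ℂ) (c' 0)) • φ 0 + (c 0 * (starRingEnd ℂ) (d' 1)) • φ 1 := by
    rw [ContinuousLinearMap.comp_apply, hX0, map_smul, hadj]
    module
  refine ⟨hsucc, hzero, fun n m => ?_⟩
  rcases m with _ | m
  · rw [hzero]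
    simp only [inner_add_right, inner_smul_right, hbi']
    grind
  · rw [hsucc (m + 1) (by omega)]
    simp only [inner_add_right, inner_smul_right, hbi', Nat.add_sub_cancel]
    obtain rfl | rfl | rfl | ⟨h₀, h₁, h₂⟩ :
        n = m ∨ n = m + 1 ∨ n = m + 1 + 1 ∨ (n ≠ m ∧ n ≠ m + 1 ∧ n ≠ m + 1 + 1) := by omega
    · simp [add_assoc]
    · simp
    · simp [add_assoc]
    · simp [h₀, h₁, h₂, Ne.symm h₀]
end

section
/- Let (φ_n), (ψ_n) be biorthogonal families in ℋ with (ψ_n) complete, and let X, Y be bounded operators on ℋ with X φ_0 = c_0 φ_0, X φ_n = c_n φ_n + d_n φ_{n−1} (n ≥ 1), Y ψ_0 = c'_0 ψ_0, and Y ψ_n = c'_n ψ_n + d'_n ψ_{n−1} (n ≥ 1). Then for every n ≥ 1, the commutator satisfies [X, Y†] φ_n = (d_{n+1} conj(d'_{n+1}) − d_n conj(d'_n)) φ_n + d_n (conj(c'_n) − conj(c'_{n−1})) φ_{n−1} + (c_{n+1} − c_n) conj(d'_{n+1}) φ_{n+1}, and [X, Y†] φ_0 = d_1 conj(d'_1)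 φ_0 + (c_1 − c_0) conj(d'_1) φ_1. -/
local notation "⟪" x ", " y "⟫" => @inner ℂ _ _ x y

/-- If `Y` lowers the complete family `ψ`, then its adjoint raises the biorthogonal family `φ`. -/
theorem adjoint_apply_of_biorthogonal_lowering {𝓗 : Type*} [NormedAddCommGroup 𝓗]
    [InnerProductSpace ℂ 𝓗] [CompleteSpace 𝓗] (Y : 𝓗 →L[ℂ] 𝓗) (φ ψ : ℕ → 𝓗)
    (hbi : ∀ n m : ℕ, ⟪φ n, ψ m⟫ = if n = m then 1 else 0)
    (hcomp : ∀ f : 𝓗, (∀ n : ℕ, ⟪ψ n, f⟫ = 0) → f = 0)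
    (c' d' : ℕ → ℂ) (hY0 : Y (ψ 0) = c' 0 • ψ 0)
    (hY : ∀ n : ℕ, 1 ≤ n → Y (ψ n) = c' n • ψ n + d' n • ψ (n - 1)) (n : ℕ) :
    ContinuousLinearMap.adjoint Y (φ n) =
      (starRingEnd ℂ) (c' n) • φ n + (starRingEnd ℂ) (d' (n + 1)) • φ (n + 1) := by
  have hbi' : ∀ m k : ℕ, ⟪ψ m, φ k⟫ = if k = m then 1 else 0 := by
    intro m k
    rw [← inner_conj_symm, hbi]
    split_ifs <;> simp
  rw [← sub_eq_zero]
  refine hcomp _ fun m => ?_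
  rw [inner_sub_right, ContinuousLinearMap.adjoint_inner_right, inner_add_right,
    inner_smul_right, inner_smul_right, hbi', hbi']
  rcases m with _ | m
  · rw [hY0, inner_smul_left, hbi']
    by_cases h : n = 0 <;> simp [h]
  · rw [hY (m + 1) (Nat.succ_pos m), inner_add_left, inner_smul_left, inner_smul_left,
      Nat.add_sub_cancel, hbi', hbi']
    by_cases h : n = m + 1
    · simp [h]
    · by_cases h' : n = m <;> simp [h, h']

/-- Under the same hypotheses as Statement 7, the commutator `[X, Y†]` acts as
`[X, Y†] φ n = (d (n+1) conj (d' (n+1)) - d n conj (d' n)) • φ n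
  + d n (conj (c' n) - conj (c' (n-1))) • φ (n-1) + (c (n+1) - c n) conj (d' (n+1)) • φ (n+1)`
for `n ≥ 1`, and `[X, Y†] φ 0 = d 1 conj (d' 1) • φ 0 + (c 1 - c 0) conj (d' 1) • φ 1`. -/
theorem stmt_8 {𝓗 : Type*} [NormedAddCommGroup 𝓗] [InnerProductSpace ℂ 𝓗] [CompleteSpace 𝓗]
    (X Y : 𝓗 →L[ℂ] 𝓗) (φ ψ : ℕ → 𝓗)
    (hbi : ∀ n m : ℕ, ⟪φ n, ψ m⟫ = if n = m then 1 else 0)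
    (hcomp : ∀ f : 𝓗, (∀ n : ℕ, ⟪ψ n, f⟫ = 0) → f = 0)
    (c d c' d' : ℕ → ℂ)
    (hX0 : X (φ 0) = c 0 • φ 0)
    (hX : ∀ n : ℕ, 1 ≤ n → X (φ n) = c n • φ n + d n • φ (n - 1))
    (hY0 : Y (ψ 0) = c' 0 • ψ 0)
    (hY : ∀ n : ℕ, 1 ≤ n → Y (ψ n) = c' n • ψ n + d' n • ψ (n - 1)) :
    (∀ n : ℕ, 1 ≤ n →
      (X ∘L ContinuousLinearMap.adjoint Y - ContinuousLinearMap.adjoint Y ∘L X) (φ n) =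
        (d (n + 1) * (starRingEnd ℂ) (d' (n + 1)) - d n * (starRingEnd ℂ) (d' n)) • φ n +
          (d n * ((starRingEnd ℂ) (c' n) - (starRingEnd ℂ) (c' (n - 1)))) • φ (n - 1) +
          ((c (n + 1) - c n) * (starRingEnd ℂ) (d' (n + 1))) • φ (n + 1)) ∧
    (X ∘L ContinuousLinearMap.adjoint Y - ContinuousLinearMap.adjoint Y ∘L X) (φ 0) =
      (d 1 * (starRingEnd ℂ) (d' 1)) • φ 0 + ((c 1 - c 0) * (starRingEnd ℂ) (d' 1)) • φ 1 := by
  have hadj := adjoint_apply_of_biorthogonal_lowering Y φ ψ hbi hcomp c' d' hY0 hY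
  constructor
  · intro n hn
    obtain ⟨k, rfl⟩ := Nat.exists_eq_add_of_le' hn
    simp only [sub_apply, ContinuousLinearMap.comp_apply, hadj, map_add,
      map_smul, hX (k + 1) hn, hX (k + 1 + 1) (Nat.succ_pos _), Nat.add_sub_cancel]
    module
  · simp only [sub_apply, ContinuousLinearMap.comp_apply, hadj, map_add,
      map_smul, hX0, hX (0 + 1) le_rfl, Nat.add_sub_cancel]
    module
end

section
/- Let r > 0 and θ ∈ ℝ, and set μ = cosh(2r), a_k = k·μ + sinh²(r), b_k = e^{iθ} cosh(r) sinh(r) √(k(k−1)), and b'_k = e^{−iθ} cosh(r) sinh(r) √((k+1)(k+2)) for k ∈ ℕ. Let p : ℕ → ℂ satisfy p(0) = 1, p(1) = 0, and p(k+2) = (1/b'_k) · ( −a_k p(k) − b_k p(k−2) ) for all k ≥ 0, with the convention that the term b_k p(k−2) is 0 when k < 2. Then for every k ∈ ℕ: p(2k) = ( −e^{iθ} tanh(r)/2 )^k · √((2k)!)/k! and p(2k+1) = 0. -/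
/-- The square root of `(n + 2)!` in terms of that of `n !`, in the complex numbers. -/
lemma sqrt_factorial_add_two (n : ℕ) :
    (Real.sqrt (Nat.factorial (n + 2)) : ℂ) =
      (Real.sqrt (((n : ℝ) + 1) * ((n : ℝ) + 2)) : ℂ) * (Real.sqrt (Nat.factorial n) : ℂ) := by
  rw [← Complex.ofReal_mul, ← Real.sqrt_mul (by positivity)]
  congr 2
  rw [Nat.factorial_succ, Nat.factorial_succ]
  push_cast
  ring

/-- For `r > 0`, `θ ∈ ℝ`, with `a k = k cosh(2r) + sinh²(r)`,
`b k = e^{iθ} cosh(r) sinh(r) √(k(k-1))`, `b' k = e^{-iθ} cosh(r) sinh(r) √((k+1)(k+2))`,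
if `p 0 = 1`, `p 1 = 0`, and `p (k+2) = (1/b' k)(-a k · p k - b k · p (k-2))` (the last term
being `0` when `k < 2`), then `p (2k) = (-e^{iθ} tanh(r)/2)^k √((2k)!)/k!` and
`p (2k+1) = 0`. -/
theorem stmt_19 (r θ : ℝ) (hr : 0 < r) (p : ℕ → ℂ)
    (hp0 : p 0 = 1) (hp1 : p 1 = 0)
    (hrec : ∀ k : ℕ, p (k + 2) =
      (1 / (Complex.exp (-(θ : ℂ) * Complex.I) * (Real.cosh r : ℂ) * (Real.sinh r : ℂ) *
          (Real.sqrt (((k : ℝ) + 1) * ((k : ℝ) + 2)) : ℂ))) *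
        (-(((k : ℂ) * (Real.cosh (2 * r) : ℂ) + (Real.sinh r : ℂ) ^ 2)) * p k -
          (if k < 2 then 0 else
            Complex.exp ((θ : ℂ) * Complex.I) * (Real.cosh r : ℂ) * (Real.sinh r : ℂ) *
              (Real.sqrt ((k : ℝ) * ((k : ℝ) - 1)) : ℂ) * p (k - 2)))) :
    ∀ k : ℕ,
      p (2 * k) =
          (-(Complex.exp ((θ : ℂ) * Complex.I) * (Real.tanh r : ℂ)) / 2) ^ k *
            (Real.sqrt (Nat.factorial (2 * k)) : ℂ) / (Nat.factorial k : ℂ) ∧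
        p (2 * k + 1) = 0 := by
  have hs : (Real.sinh r : ℂ) ≠ 0 := by
    exact_mod_cast (Real.sinh_pos_iff.2 hr).ne'
  have hc : (Real.cosh r : ℂ) ≠ 0 := by
    exact_mod_cast (Real.cosh_pos r).ne'
  have hc2 : (Real.cosh (2 * r) : ℂ) = (Real.cosh r : ℂ) ^ 2 + (Real.sinh r : ℂ) ^ 2 := by
    exact_mod_cast (Real.cosh_two_mul r)
  have ht : (Real.tanh r : ℂ) = (Real.sinh r : ℂ) / (Real.cosh r : ℂ) := by
    exact_mod_cast (Real.tanh_eq_sinh_div_cosh r)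
  have hE : Complex.exp ((θ : ℂ) * Complex.I) ≠ 0 := Complex.exp_ne_zero _
  have hE' : Complex.exp (-(θ : ℂ) * Complex.I) = (Complex.exp ((θ : ℂ) * Complex.I))⁻¹ := by
    rw [neg_mul, Complex.exp_neg]
  have hv (n : ℕ) : (Real.sqrt (((n : ℝ) + 1) * ((n : ℝ) + 2)) : ℂ) ≠ 0 := by
    exact_mod_cast (Real.sqrt_pos.2 (by positivity)).ne'
  have hv2 (n : ℕ) : (Real.sqrt (((n : ℝ) + 1) * ((n : ℝ) + 2)) : ℂ) ^ 2 =
      ((n : ℂ) + 1) * ((n : ℂ) + 2) := by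
    exact_mod_cast Real.sq_sqrt (show 0 ≤ ((n : ℝ) + 1) * ((n : ℝ) + 2) by positivity)
  rw [hE', hc2] at hrec
  rw [ht]
  generalize Complex.exp ((θ : ℂ) * Complex.I) = E at *
  generalize (Real.sinh r : ℂ) = s at *
  generalize (Real.cosh r : ℂ) = c at *
  intro k
  induction k using Nat.twoStepInduction with
  | zero => simp [hp0, hp1]
  | one =>
    refine ⟨?_, ?_⟩
    · have h := hrec 0
      have hf := sqrt_factorial_add_two 0
      have hu := hv 0
      have hu2 := hv2 0
      rw [show 2 * 1 = 0 + 2 from rfl, h, hf]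
      generalize (Real.sqrt ((((0 : ℕ) : ℝ) + 1) * (((0 : ℕ) : ℝ) + 2)) : ℂ) = u at *
      simp [hp0] at hu2 ⊢
      field_simp
      rw [hu2]
    · simpa [hp1] using hrec 1
  | more m ih₀ ih₁ =>
    refine ⟨?_, ?_⟩
    · have h := hrec (2 * m + 2)
      have hb : (((2 * m + 2 : ℕ) : ℝ) * (((2 * m + 2 : ℕ) : ℝ) - 1)) =
          (((2 * m : ℕ) : ℝ) + 1) * (((2 * m : ℕ) : ℝ) + 2) := by
        push_cast
        ring
      have hp : p (2 * m + 2) = _ := ih₁.1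
      have hf : (m.factorial : ℂ) ≠ 0 := by exact_mod_cast m.factorial_ne_zero
      have hm1 : (m : ℂ) + 1 ≠ 0 := by exact_mod_cast m.succ_ne_zero
      have hm2 : (m : ℂ) + 1 + 1 ≠ 0 := by exact_mod_cast (m + 1).succ_ne_zero
      have hu2 := hv2 (2 * m + 2)
      have hu := hv (2 * m + 2)
      rw [if_neg (by omega), hb, Nat.add_sub_cancel, ih₀.1, hp] at h
      rw [show 2 * (m + 2) = 2 * m + 2 + 2 from rfl, h, show 2 * (m + 1) = 2 * m + 2 from rfl,
        sqrt_factorial_add_two (2 * m + 2), sqrt_factorial_add_two (2 * m),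
        Nat.factorial_succ (m + 1), Nat.factorial_succ m]
      generalize (Real.sqrt (((2 * m + 2 : ℕ) + 1) * ((2 * m + 2 : ℕ) + 2)) : ℂ) = v at *
      generalize (Real.sqrt (((2 * m : ℕ) + 1) * ((2 * m : ℕ) + 2)) : ℂ) = u at *
      generalize (Real.sqrt (Nat.factorial (2 * m)) : ℂ) = S at *
      rw [pow_succ _ (m + 1), pow_succ _ m]
      generalize (-(E * (s / c)) / 2) ^ m = X at *
      push_cast at hu2 ⊢
      field_simp
      linear_combination -X * u * S * s ^ 2 * hu2
    · have h := hrec (2 * m + 3)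
      have hp : p (2 * m + 3) = 0 := ih₁.2
      rw [hp, if_neg (by omega), show 2 * m + 3 - 2 = 2 * m + 1 from rfl, ih₀.2] at h
      rw [show 2 * (m + 2) + 1 = 2 * m + 3 + 2 from by ring]
      simpa using h
end
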